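/- Let q be a real number with q > 0 and q ≠ 1, and let d_0 and d_1 be integers with d_0 > d_1 ≥ 1. Then ∑_{j=1}^{d_1} ([2d_0]_q/[j]_q) · [d_0 + d_1 + j − 1 choose j − 1]_q · [d_0 − d_1 − 1 choose j − 1]_q · [2d_1 choose d_1 − j]_q = ([2d_0]_q/[d_0]_q) · [d_0 choose d_1]_q · [d_0 + d_1 − 1 choose d_0]_q. (This is the q-binomial identity, evaluated via the q-Pfaff–Saalschütz summation, to which the first main theorem reduces after substituting the closed form of f.) -/

import Mathlib

attribute [local instance] Classical.propDecidable

/-- The symmetric ("physics convention") `q`-integer `[a]_q = q^{a/2} - q^{-a/2}`. -/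
noncomputable def qint (q : ℝ) (a : ℤ) : ℝ :=
  q ^ ((a : ℝ) / 2) - q ^ (-((a : ℝ) / 2))

/-- The `q`-binomial coefficient
`[n choose k]_q = ([n]_q [n-1]_q ⋯ [n-k+1]_q)/([k]_q [k-1]_q ⋯ [1]_q)` for `0 ≤ k ≤ n`,
and `0` otherwise. -/
noncomputable def qbinom (q : ℝ) (n k : ℤ) : ℝ :=
  if 0 ≤ k ∧ k ≤ n then
    (∏ i ∈ Finset.range k.toNat, qint q (n - (i : ℤ))) /
      ∏ i ∈ Finset.range k.toNat, qint q (k - (i : ℤ))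
  else 0

lemma qint_eq_zpow {q : ℝ} (hq : 0 < q) (a : ℤ) :
    qint q a = (q ^ (1 / 2 : ℝ)) ^ a - (q ^ (1 / 2 : ℝ)) ^ (-a) := by
  unfold qint
  rw [← Real.rpow_intCast, ← Real.rpow_intCast, ← Real.rpow_mul hq.le, ← Real.rpow_mul hq.le]
  congr 2 <;> push_cast <;> ring

lemma qint_zero (q : ℝ) : qint q 0 = 0 := by
  simp [qint]

lemma qint_ne_zero {q : ℝ} (hq : 0 < q) (hq1 : q ≠ 1) {a : ℤ} (ha : a ≠ 0) : qint q a ≠ 0 := by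
  intro h
  have h' := (Real.rpow_right_inj hq hq1).mp (sub_eq_zero.mp h)
  have : (a : ℝ) = 0 := by linarith
  exact ha (by exact_mod_cast this)

/-- The rational-function identity certifying that the summand telescopes. -/
lemma qint_certificate {q : ℝ} (hq : 0 < q) (a b k : ℤ) :
    qint q (a - b + 1) * qint q (a + 1) * qint q (a + b + k + 1) * qint q (a - b) -
        qint q (a + b) * qint q a * qint q (a + b + 1) * qint q (a - b - k) =
      -qint q (2 * a + 1) * (qint q (a + b + k + 1) * qint q (b - 1 - k) * qint q (a - b - k) -
        qint q k * qint q (k + 1) * qint q (b + k + 1)) := by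
  have hy : (q ^ (1 / 2 : ℝ)) ≠ 0 := (Real.rpow_pos_of_pos hq _).ne'
  simp only [qint_eq_zpow hq]
  generalize q ^ (1 / 2 : ℝ) = y at hy
  have hA : y ^ a ≠ 0 := zpow_ne_zero _ hy
  have hB : y ^ b ≠ 0 := zpow_ne_zero _ hy
  have hK : y ^ k ≠ 0 := zpow_ne_zero _ hy
  simp only [zpow_neg, two_mul, zpow_add₀ hy, zpow_sub₀ hy, zpow_one]
  generalize y ^ a = A at hA
  generalize y ^ b = B at hB
  generalize y ^ k = K at hK
  field_simp
  ring

/-- The `q`-binomial coefficient as a product, with no restriction on the upper argument. -/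
noncomputable def qchoose (q : ℝ) (n : ℤ) (k : ℕ) : ℝ :=
  ∏ i ∈ Finset.range k, qint q (n - i) / qint q (i + 1)

lemma qchoose_zero_right (q : ℝ) (n : ℤ) : qchoose q n 0 = 1 := by
  simp [qchoose]

lemma qchoose_eq_zero_of_lt (q : ℝ) {n k : ℕ} (h : n < k) : qchoose q n k = 0 := by
  refine Finset.prod_eq_zero (Finset.mem_range.mpr h) ?_
  simp [qint_zero]

lemma qbinom_natCast (q : ℝ) (n k : ℕ) : qbinom q n k = qchoose q n k := by
  by_cases h : k ≤ n
  · have hden : ∏ i ∈ Finset.range k, qint q ((k : ℤ) - i) =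
        ∏ i ∈ Finset.range k, qint q ((i : ℤ) + 1) := by
      rw [← Finset.prod_range_reflect]
      refine Finset.prod_congr rfl fun i hi => ?_
      have := Finset.mem_range.mp hi
      congr 1
      omega
    rw [qbinom, if_pos ⟨by positivity, by exact_mod_cast h⟩, Int.toNat_natCast, hden, qchoose,
      Finset.prod_div_distrib]
  · rw [qbinom, if_neg (by omega), qchoose_eq_zero_of_lt q (not_le.mp h)]

lemma qchoose_succ_right (q : ℝ) (n : ℤ) (k : ℕ) :
    qchoose q n (k + 1) = qint q (n - k) / qint q (k + 1) * qchoose q n k := by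
  rw [qchoose, Finset.prod_range_succ, mul_comm, qchoose]

lemma qchoose_succ_succ (q : ℝ) (n : ℤ) (k : ℕ) :
    qchoose q (n + 1) (k + 1) = qint q (n + 1) / qint q (k + 1) * qchoose q n k := by
  simp only [qchoose, Finset.prod_div_distrib]
  rw [Finset.prod_range_succ', Finset.prod_range_succ (fun i : ℕ => qint q ((i : ℤ) + 1))]
  simp only [Nat.cast_add, Nat.cast_one, Nat.cast_zero, sub_zero, add_sub_add_right_eq_sub]
  rw [mul_div_mul_comm, mul_comm]

lemma qchoose_succ_left {q : ℝ} (hq : 0 < q) (hq1 : q ≠ 1) (n : ℤ) (k : ℕ) :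
    qchoose q (n + 1) k * qint q (n + 1 - k) = qint q (n + 1) * qchoose q n k := by
  have hk : qint q ((k : ℤ) + 1) ≠ 0 := qint_ne_zero hq hq1 (by omega)
  have h := (qchoose_succ_right q (n + 1) k).symm.trans (qchoose_succ_succ q n k)
  field_simp at h
  linear_combination h

lemma qchoose_succ_self {q : ℝ} (hq : 0 < q) (hq1 : q ≠ 1) (n : ℕ) :
    qchoose q (n + 1) n = qint q (n + 1) / qint q 1 := by
  have h1 : qint q 1 ≠ 0 := qint_ne_zero hq hq1 one_ne_zero
  induction n with
  | zero => simp [qchoose_zero_right, h1]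
  | succ n ih =>
    have hn : qint q ((n : ℤ) + 1) ≠ 0 := qint_ne_zero hq hq1 (by omega)
    push_cast
    rw [qchoose_succ_succ q, ih]
    field_simp

/-- The `k`-th summand of the identity, without the common factor `[2a]_q`, where
`a = b + 1 + N` and `b = m + 1`. -/
noncomputable def saalTerm (q : ℝ) (m N k : ℕ) : ℝ :=
  qchoose q (N + 2 * m + 3 + k) k * qchoose q N k * qchoose q (2 * (m + 1)) (m - k) /
    qint q (k + 1)

lemma saalTerm_succ_zero {q : ℝ} (hq : 0 < q) (hq1 : q ≠ 1) (m N : ℕ) :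
    qint q (N + 2) * qint q (N + m + 3) * saalTerm q m (N + 1) 0 -
        qint q (N + 2 * m + 3) * qint q (N + m + 2) * saalTerm q m N 0 =
      -qint q (2 * (N + m + 2) + 1) * qint q m * saalTerm q m N 0 := by
  have h := qint_certificate hq (N + m + 2) (m + 1) 0
  have h1 : qint q ((N : ℤ) + 2 * m + 4) ≠ 0 := qint_ne_zero hq hq1 (by omega)
  have h2 : qint q ((N : ℤ) + 1) ≠ 0 := qint_ne_zero hq hq1 (by omega)
  simp only [saalTerm, qchoose_zero_right, qint_zero] at h ⊢
  ring_nf at h h1 h2 ⊢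
  apply mul_left_cancel₀ (mul_ne_zero h1 h2)
  linear_combination
    (qchoose q (2 + (m : ℤ) * 2) (m - 0) * (qint q 1)⁻¹) * h

lemma saalTerm_succ_succ {q : ℝ} (hq : 0 < q) (hq1 : q ≠ 1) {m k : ℕ} (N : ℕ) (hk : k < m) :
    qint q (N + 2) * qint q (N + m + 3) * saalTerm q m (N + 1) (k + 1) -
        qint q (N + 2 * m + 3) * qint q (N + m + 2) * saalTerm q m N (k + 1) =
      -qint q (2 * (N + m + 2) + 1) / qint q (N + 2 * m + 4) *
        (qint q (N + 2 * m + 5 + k) * qint q (m - 1 - k) * saalTerm q m N (k + 1) -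
          qint q (N + 2 * m + 4 + k) * qint q (m - k) * saalTerm q m N k) := by
  obtain ⟨l, rfl⟩ : ∃ l, m = k + 1 + l := ⟨m - (k + 1), by omega⟩
  have h := qint_certificate hq (N + (k + 1 + l) + 2) (k + 1 + l + 1) (k + 1)
  have h1 : qint q ((N : ℤ) + 2 * (k + 1 + l) + 4) ≠ 0 := qint_ne_zero hq hq1 (by omega)
  have h2 : qint q ((k : ℤ) + 1) ≠ 0 := qint_ne_zero hq hq1 (by omega)
  have h3 : qint q ((k : ℤ) + 2) ≠ 0 := qint_ne_zero hq hq1 (by omega)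
  have h4 : qint q ((l : ℤ) + 1) ≠ 0 := qint_ne_zero hq hq1 (by omega)
  have eX := qchoose_succ_succ q (N + 2 * (k + 1 + l) + 3 + k) k
  have eX' := qchoose_succ_left hq hq1 (N + 2 * (k + 1 + l) + 3 + (k + 1)) (k + 1)
  have eY := qchoose_succ_right q N k
  have eY' := qchoose_succ_succ q N k
  have eZ := qchoose_succ_right q (2 * (k + 1 + l + 1)) l
  rw [saalTerm, saalTerm, saalTerm, show k + 1 + l - k = l + 1 by omega,
    show k + 1 + l - (k + 1) = l by omega]
  push_cast at eX' ⊢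
  have i1 : (N : ℤ) + 2 * (k + 1 + l) + 3 + (k + 1) + 1 - (k + 1) =
    N + 2 * (k + 1 + l) + 4 := by ring
  rw [i1, ← eq_div_iff h1] at eX'
  rw [add_assoc _ (k : ℤ) 1] at eX
  rw [show (N : ℤ) + 1 + 2 * (k + 1 + l) + 3 + (k + 1) =
    N + 2 * (k + 1 + l) + 3 + (k + 1) + 1 by ring, eX', eX, eY, eY', eZ]
  generalize qchoose q (N + 2 * (k + 1 + l) + 3 + k) k = X
  generalize qchoose q N k = Y
  generalize qchoose q (2 * (k + 1 + l + 1)) l = Z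
  ring_nf at h h1 h2 h3 h4 ⊢
  field_simp
  linear_combination qint q (6 + N + k * 3 + l * 2) * X * Y * Z * h

lemma sum_saalTerm_succ {q : ℝ} (hq : 0 < q) (hq1 : q ≠ 1) (m N : ℕ) :
    qint q (N + 2) * qint q (N + m + 3) * ∑ k ∈ Finset.range (m + 1), saalTerm q m (N + 1) k =
      qint q (N + 2 * m + 3) * qint q (N + m + 2) *
        ∑ k ∈ Finset.range (m + 1), saalTerm q m N k := by
  have h1 : qint q ((N : ℤ) + 2 * m + 4) ≠ 0 := qint_ne_zero hq hq1 (by omega)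
  have key : ∀ n ≤ m, ∑ k ∈ Finset.range (n + 1),
      (qint q (N + 2) * qint q (N + m + 3) * saalTerm q m (N + 1) k -
        qint q (N + 2 * m + 3) * qint q (N + m + 2) * saalTerm q m N k) =
      -qint q (2 * (N + m + 2) + 1) / qint q (N + 2 * m + 4) *
        (qint q (N + 2 * m + 4 + n) * qint q (m - n) * saalTerm q m N n) := by
    intro n
    induction n with
    | zero =>
      intro _
      rw [Finset.sum_range_one, saalTerm_succ_zero hq hq1]
      simp only [Nat.cast_zero, add_zero, sub_zero]
      field_simp
    | succ n ih =>
      intro hn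
      rw [Finset.sum_range_succ, ih (by omega), saalTerm_succ_succ hq hq1 N (by omega)]
      have e1 : (N : ℤ) + 2 * m + 4 + (n + 1 : ℕ) = N + 2 * m + 5 + n := by push_cast; ring
      have e2 : (m : ℤ) - (n + 1 : ℕ) = m - 1 - n := by push_cast; ring
      rw [e1, e2]
      ring
  have h := key m le_rfl
  rw [sub_self, qint_zero, Finset.sum_sub_distrib, ← Finset.mul_sum, ← Finset.mul_sum] at h
  linear_combination h

lemma sum_saalTerm {q : ℝ} (hq : 0 < q) (hq1 : q ≠ 1) (m N : ℕ) :
    ∑ k ∈ Finset.range (m + 1), saalTerm q m N k =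
      qchoose q (N + m + 2) (m + 1) * qchoose q (N + 2 * m + 2) (N + m + 2) /
        qint q (N + m + 2) := by
  induction N with
  | zero =>
    have hz : ∀ k ∈ Finset.range (m + 1), k ≠ 0 → saalTerm q m 0 k = 0 := by
      intro k _ hk
      rw [saalTerm, qchoose_eq_zero_of_lt q (Nat.pos_of_ne_zero hk), mul_zero, zero_mul, zero_div]
    rw [Finset.sum_eq_single_of_mem 0 (by simp) hz]
    have h1 : qint q ((m : ℤ) + 1) ≠ 0 := qint_ne_zero hq hq1 (by omega)
    have h2 : qint q ((m : ℤ) + 2) ≠ 0 := qint_ne_zero hq hq1 (by omega)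
    have h3 : qint q 1 ≠ 0 := qint_ne_zero hq hq1 one_ne_zero
    have eA := qchoose_succ_self hq hq1 (m + 1)
    have eB := qchoose_succ_right q (2 * m + 2) (m + 1)
    have eC := qchoose_succ_right q (2 * m + 2) m
    push_cast at eA eB eC
    have i1 : (m : ℤ) + 1 + 1 = m + 2 := by ring
    have i2 : (2 * m + 2 : ℤ) - (m + 1) = m + 1 := by ring
    have i3 : (2 * m + 2 : ℤ) - m = m + 2 := by ring
    have i4 : 2 * ((m : ℤ) + 1) = 2 * m + 2 := by ring
    rw [i1] at eA
    rw [i1, i2, eC, i3] at eB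
    simp only [saalTerm, qchoose_zero_right, Nat.cast_zero, zero_add, Nat.sub_zero, i4]
    rw [eA, show m + 2 = m + 1 + 1 from rfl, eB]
    field_simp
  | succ N ih =>
    have h1 : qint q ((N : ℤ) + 2) ≠ 0 := qint_ne_zero hq hq1 (by omega)
    have h2 : qint q ((N : ℤ) + m + 3) ≠ 0 := qint_ne_zero hq hq1 (by omega)
    have h3 : qint q ((N : ℤ) + m + 2) ≠ 0 := qint_ne_zero hq hq1 (by omega)
    have h := sum_saalTerm_succ hq hq1 m N
    rw [ih] at h
    have eA := qchoose_succ_left hq hq1 (N + m + 2) (m + 1)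
    have eB := qchoose_succ_succ q (N + 2 * m + 2) (N + m + 2)
    push_cast at eA eB ⊢
    have i1 : (N : ℤ) + m + 2 + 1 = N + m + 3 := by ring
    have i2 : (N : ℤ) + m + 3 - (m + 1) = N + 2 := by ring
    have i3 : (N : ℤ) + 2 * m + 2 + 1 = N + 2 * m + 3 := by ring
    have i4 : (N : ℤ) + 1 + m + 2 = N + m + 3 := by ring
    have i5 : (N : ℤ) + 1 + 2 * m + 2 = N + 2 * m + 3 := by ring
    have i6 : N + 1 + m + 2 = N + m + 2 + 1 := by ring
    rw [i1, i2] at eA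
    rw [i1, i3] at eB
    rw [i4, i5, i6, eB]
    apply mul_left_cancel₀ (mul_ne_zero h1 h2)
    rw [h]
    field_simp
    linear_combination -qint q (N + 2 * m + 3) * qchoose q (N + 2 * m + 2) (N + m + 2) * eA

/-- The `q`-binomial identity (evaluated via the `q`-Pfaff–Saalschütz summation) to
which Theorem 2 of the paper reduces after substituting the closed form of `f`:
for integers `d0 > d1 ≥ 1`,
`∑_{j=1}^{d1} ([2d0]_q/[j]_q) [d0+d1+j-1 choose j-1]_q [d0-d1-1 choose j-1]_q
   [2d1 choose d1-j]_q
 = ([2d0]_q/[d0]_q) [d0 choose d1]_q [d0+d1-1 choose d0]_q`. -/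
theorem final_sum_dP1 (q : ℝ) (hq0 : 0 < q) (hq1 : q ≠ 1)
    (d0 d1 : ℤ) (hd1 : 1 ≤ d1) (hd0 : d1 < d0) :
    (∑ j ∈ Finset.Icc (1 : ℤ) d1,
      qint q (2 * d0) / qint q j * qbinom q (d0 + d1 + j - 1) (j - 1) *
        qbinom q (d0 - d1 - 1) (j - 1) * qbinom q (2 * d1) (d1 - j))
    = qint q (2 * d0) / qint q d0 * qbinom q d0 d1 * qbinom q (d0 + d1 - 1) d0 := by
  obtain ⟨m, rfl⟩ : ∃ m : ℕ, d1 = m + 1 := ⟨(d1 - 1).toNat, by omega⟩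
  obtain ⟨N, rfl⟩ : ∃ N : ℕ, d0 = N + m + 2 := ⟨(d0 - m - 2).toNat, by omega⟩
  have hsum : ∑ j ∈ Finset.Icc (1 : ℤ) (m + 1),
      qint q (2 * (N + m + 2)) / qint q j * qbinom q (N + m + 2 + (m + 1) + j - 1) (j - 1) *
        qbinom q (N + m + 2 - (m + 1) - 1) (j - 1) * qbinom q (2 * (m + 1)) (m + 1 - j) =
      ∑ k ∈ Finset.range (m + 1), qint q (2 * (N + m + 2)) * saalTerm q m N k := by
    symm
    refine Finset.sum_bij (fun (k : ℕ) _ => (k : ℤ) + 1) ?_ ?_ ?_ ?_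
    · intro k hk
      simp only [Finset.mem_range, Finset.mem_Icc] at hk ⊢
      omega
    · intro _ _ _ _ h
      omega
    · intro j hj
      simp only [Finset.mem_Icc] at hj
      exact ⟨(j - 1).toNat, by simp only [Finset.mem_range]; omega, by omega⟩
    · intro k hk
      have hk' := Finset.mem_range.mp hk
      have e1 : (N : ℤ) + m + 2 + (m + 1) + (k + 1) - 1 = (N + 2 * m + 3 + k : ℕ) := by
        push_cast; ring
      have e2 : (k : ℤ) + 1 - 1 = k := by ring
      have e3 : (N : ℤ) + m + 2 - (m + 1) - 1 = N := by ring
      have e4 : (2 * (m + 1) : ℤ) = (2 * (m + 1) : ℕ) := by push_cast; ring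
      have e5 : (m : ℤ) + 1 - (k + 1) = (m - k : ℕ) := by omega
      rw [e1, e2, e3, e4, e5, qbinom_natCast, qbinom_natCast, qbinom_natCast, saalTerm]
      push_cast
      ring
  have e1 : (N : ℤ) + m + 2 + (m + 1) - 1 = (N + 2 * m + 2 : ℕ) := by push_cast; ring
  have e2 : (N : ℤ) + m + 2 = (N + m + 2 : ℕ) := by push_cast; ring
  have e3 : (m : ℤ) + 1 = (m + 1 : ℕ) := by push_cast; ring
  rw [hsum, ← Finset.mul_sum, sum_saalTerm hq0 hq1, e1, e2, e3, qbinom_natCast, qbinom_natCast]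
  push_cast
  ring
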